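/- There exists an absolute constant c > 0 such that the following holds. In the model Y = Xβ* + ξ where X is an n×p random matrix (p ≥ n) with i.i.d. N(0,Σ) rows, if k* ≤ c·n, then for η > 0 small enough there exist absolute constants c₁, c₂, c₃ > 0 such that with probability at least 1 − c₁e^{−c₂n}, the minimum ℓ2-norm interpolator β̂ satisfies both ‖β̂ − β*‖₂ ≤ ρ and ‖Σ^{1/2}(β̂ − β*)‖₂ ≤ max( ρ·r*(η), c₃‖ξ‖₂/√n ). -/

import Mathlib

open MeasureTheory ProbabilityTheory Matrix Finset
open scoped ENNReal Classical

noncomputable section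

/-- Euclidean (`ℓ2`) norm of a finite real vector. -/
def enorm2 {m : ℕ} (v : Fin m → ℝ) : ℝ := Real.sqrt (∑ i, v i ^ 2)

/-- The prediction (semi-)norm `‖Σ^{1/2} d‖₂ = √(dᵀ Σ d)`. -/
def predNorm {p : ℕ} (Sig : Matrix (Fin p) (Fin p) ℝ) (d : Fin p → ℝ) : ℝ :=
  Real.sqrt (d ⬝ᵥ Sig.mulVec d)

/-- The standard Gaussian measure `N(0, I_p)` on `ℝ^p`. -/
def stdGaussian (p : ℕ) : Measure (Fin p → ℝ) :=
  Measure.pi fun _ : Fin p => gaussianReal 0 1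

/-- `Σ^{1/2} = P Λ^{1/2} Pᵀ` built from the eigendecomposition data. -/
def covHalf (p : ℕ) (lam : ℕ → ℝ) (Porth : Matrix (Fin p) (Fin p) ℝ) :
    Matrix (Fin p) (Fin p) ℝ :=
  Porth * Matrix.diagonal (fun i : Fin p => Real.sqrt (lam ((i : ℕ) + 1))) * Porthᵀ

/-- The Gaussian law `N(0,Σ)` on `ℝ^p`, realized as the pushforward of `N(0,I_p)`
by `g ↦ Σ^{1/2} g`. -/
def mvGaussian (p : ℕ) (lam : ℕ → ℝ) (Porth : Matrix (Fin p) (Fin p) ℝ) :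
    Measure (Fin p → ℝ) :=
  Measure.map (fun g => (covHalf p lam Porth).mulVec g) (stdGaussian p)

/-- `r_k(Σ) = ∑_{i=k}^p λ_i(Σ)` (eigenvalues `1`-indexed). -/
def rsum (p : ℕ) (lam : ℕ → ℝ) (k : ℕ) : ℝ := ∑ i ∈ Finset.Icc k p, lam i

/-- The set `{k ∈ {1,…,p} : r_k(Σ)/λ_k(Σ) ≥ c₀ n}`. -/
def kstarSet (p : ℕ) (lam : ℕ → ℝ) (c0 : ℝ) (n : ℕ) : Set ℕ :=
  {k | 1 ≤ k ∧ k ≤ p ∧ c0 * n ≤ rsum p lam k / lam k}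

/-- `k* = inf { k ∈ {1,…,p} : r_k(Σ)/λ_k(Σ) ≥ c₀ n }`. -/
def kstar (p : ℕ) (lam : ℕ → ℝ) (c0 : ℝ) (n : ℕ) : ℕ := sInf (kstarSet p lam c0 n)

/-- `ρ = ‖β*‖₂ + 4‖ξ‖₂/√(r_{k*}(Σ))`. -/
def rho (p : ℕ) (lam : ℕ → ℝ) (c0 : ℝ) (n : ℕ) (βstar : Fin p → ℝ) (ξnorm : ℝ) : ℝ :=
  enorm2 βstar + 4 * ξnorm / Real.sqrt (rsum p lam (kstar p lam c0 n))

/-- `r*(η) = inf { r > 0 : ∑ᵢ min(λ_i(Σ), r²) ≤ η n r² }`. -/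
def rstar (p n : ℕ) (lam : ℕ → ℝ) (η : ℝ) : ℝ :=
  sInf {r : ℝ | 0 < r ∧ ∑ i : Fin p, min (lam ((i : ℕ) + 1)) (r ^ 2) ≤ η * n * r ^ 2}

/-- `r̄(γ) = sup { r > 0 : ∑ᵢ min(λ_i(Σ)ρ², r²) ≤ γ ‖ξ‖₂² }`. -/
def rbar (p : ℕ) (lam : ℕ → ℝ) (γ ρ ξnorm : ℝ) : ℝ :=
  sSup {r : ℝ | 0 < r ∧ ∑ i : Fin p, min (lam ((i : ℕ) + 1) * ρ ^ 2) (r ^ 2) ≤ γ * ξnorm ^ 2}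

/-- `k̄ = inf { k ≥ k* : r_k(Σ) ≤ (γ/2) r_{k*}(Σ) }`, with `k̄ = p+1` if the set is empty. -/
def kbar (p : ℕ) (lam : ℕ → ℝ) (c0 : ℝ) (n : ℕ) (γ : ℝ) : ℕ :=
  if _h : {k | kstar p lam c0 n ≤ k ∧
      rsum p lam k ≤ γ / 2 * rsum p lam (kstar p lam c0 n)}.Nonempty
  then sInf {k | kstar p lam c0 n ≤ k ∧
      rsum p lam k ≤ γ / 2 * rsum p lam (kstar p lam c0 n)}
  else p + 1

/-- `b` is a minimum `ℓ2`-norm interpolator for the design `M` and responses `Y`. -/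
def IsMinInterp {n p : ℕ} (M : Fin n → Fin p → ℝ) (Y : Fin n → ℝ) (b : Fin p → ℝ) : Prop :=
  (∀ i, ∑ j, M i j * b j = Y i) ∧
    ∀ b' : Fin p → ℝ, (∀ i, ∑ j, M i j * b' j = Y i) → enorm2 b ≤ enorm2 b'

/-!
On the event that the smallest singular value of `Xᵀ` is at least `s = √(r_{k*}) / 4`, every vector
of the noise space has a preimage under `X` of norm at most `s⁻¹` times its own. Minimality then
gives `‖β̂ - β*‖ ≤ ‖β*‖ + ‖ξ‖ / s = ρ`. Either `‖Σ^{1/2}(β̂ - β*)‖ ≤ r*(η) ‖β̂ - β*‖`, which is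
already enough, or `β̂ - β*` lies in the cone `r*(η) ‖h‖ ≤ ‖Σ^{1/2} h‖`. If `X` is bounded below on
that cone by a multiple of `√n ‖Σ^{1/2} ·‖`, the identity `X (β̂ - β*) = ξ` finishes the argument.

Both events concern a product `X = A Σ^{1/2}` with `A` a standard Gaussian operator. Chi-square
deviations on a net of the unit sphere, which has at most `9^d` points in dimension `d`, control
`A` on low-dimensional subspaces and `Σ^{1/2} Aᵀ` on the noise space; for the latter the
eigenvalues of index at least `k*` already carry enough mass. For the bound on the cone the spectrum
is split at a small multiple of `r*(η)²`. By definition of `r*` only a small fraction of `n`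
eigenvalues exceed this level, so `A` is bounded below on their eigenspaces, and the remaining part
of `X` has small operator norm.
-/

section ChiSquare

lemma exp_neg_add_sq_le_one_sub {x : ℝ} (hx : x ≤ 1 / 2) :
    Real.exp (-(x + x ^ 2)) ≤ 1 - x := by
  have hx1 : 0 ≤ 1 - x := by linarith
  rw [Real.exp_neg, inv_le_iff_one_le_mul₀ (Real.exp_pos _)]
  rcases le_total x 0 with h | h
  · have hexp := mul_le_mul_of_nonneg_left (Real.add_one_le_exp (x + x ^ 2)) hx1
    nlinarith [mul_nonneg (sq_nonneg x) (neg_nonneg.2 h)]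
  · have hexp := mul_le_mul_of_nonneg_left
      (Real.quadratic_le_exp_of_nonneg (by positivity : 0 ≤ x + x ^ 2)) hx1
    have hpoly : 2 * x ≤ (1 - x) * (1 + x) ^ 2 := by
      nlinarith [mul_nonneg h h, mul_nonneg (mul_nonneg h h) (by linarith : 0 ≤ 1 / 2 - x)]
    nlinarith [mul_le_mul_of_nonneg_left hpoly (sq_nonneg x)]

lemma gaussianPDFReal_mul_exp_sq (s x : ℝ) :
    gaussianPDFReal 0 1 x * Real.exp (s * x ^ 2) =
      (√(2 * Real.pi))⁻¹ * Real.exp (-(1 / 2 - s) * x ^ 2) := by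
  rw [gaussianPDFReal_def]
  simp only [NNReal.coe_one, mul_one, sub_zero]
  rw [mul_assoc, ← Real.exp_add]
  congr 2
  ring

lemma integrable_exp_mul_sq_gaussianReal {s : ℝ} (hs : s < 1 / 2) :
    Integrable (fun x => Real.exp (s * x ^ 2)) (gaussianReal 0 1) := by
  rw [gaussianReal_of_var_ne_zero _ one_ne_zero,
    integrable_withDensity_iff (measurable_gaussianPDF 0 1)
      (Filter.Eventually.of_forall fun _ => gaussianPDF_lt_top)]
  simp_rw [toReal_gaussianPDF, mul_comm (Real.exp _), gaussianPDFReal_mul_exp_sq]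
  exact (integrable_exp_neg_mul_sq (by linarith)).const_mul _

lemma integral_exp_mul_sq_gaussianReal {s : ℝ} (hs : s < 1 / 2) :
    ∫ x, Real.exp (s * x ^ 2) ∂(gaussianReal 0 1) = √((1 - 2 * s)⁻¹) := by
  rw [integral_gaussianReal_eq_integral_smul one_ne_zero]
  simp_rw [smul_eq_mul, gaussianPDFReal_mul_exp_sq]
  rw [integral_const_mul, integral_gaussian, ← Real.sqrt_inv, ← Real.sqrt_mul (by positivity)]
  congr 1
  have hne : 1 - 2 * s ≠ 0 := by linarith
  field_simp

lemma integral_exp_mul_sq_gaussianReal_le {s : ℝ} (hs : s ≤ 1 / 4) :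
    ∫ x, Real.exp (s * x ^ 2) ∂(gaussianReal 0 1) ≤ Real.exp (s + 2 * s ^ 2) := by
  rw [integral_exp_mul_sq_gaussianReal (by linarith)]
  refine Real.sqrt_le_iff.2 ⟨(Real.exp_pos _).le, ?_⟩
  calc (1 - 2 * s)⁻¹ ≤ (Real.exp (-(2 * s + (2 * s) ^ 2)))⁻¹ := by
        gcongr
        exact exp_neg_add_sq_le_one_sub (by linarith)
    _ = Real.exp (s + 2 * s ^ 2) ^ 2 := by
        rw [← Real.exp_neg, ← Real.exp_nat_mul]
        congr 1
        push_cast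
        ring

variable {κ : Type*} [Fintype κ] {w : κ → ℝ} {L s : ℝ}

lemma integrable_exp_mul_weighted_sq (hs : ∀ j, s * w j ≤ 1 / 4) :
    Integrable (fun z => Real.exp (s * ∑ j, w j * z j ^ 2))
      (ProbabilityTheory.stdGaussian (EuclideanSpace ℝ κ)) := by
  rw [← map_pi_eq_stdGaussian, integrable_map_measure (by fun_prop) (by fun_prop)]
  have h := Integrable.fintype_prod (μ := fun _ : κ => gaussianReal 0 1)
    (f := fun (j : κ) (x : ℝ) => Real.exp (s * w j * x ^ 2))
    fun j => integrable_exp_mul_sq_gaussianReal (by linarith [hs j])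
  refine h.congr (Filter.Eventually.of_forall fun z => ?_)
  simp only [← Real.exp_sum, Finset.mul_sum, mul_assoc, Function.comp_apply]

lemma mgf_weighted_sq :
    mgf (fun z => ∑ j, w j * z j ^ 2) (ProbabilityTheory.stdGaussian (EuclideanSpace ℝ κ)) s =
      ∏ j, ∫ x, Real.exp (s * w j * x ^ 2) ∂(gaussianReal 0 1) := by
  rw [← integral_fintype_prod_eq_prod (𝕜 := ℝ) (μ := fun _ : κ => gaussianReal 0 1)
    (fun j x => Real.exp (s * w j * x ^ 2)), ← map_pi_eq_stdGaussian, mgf,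
    integral_map (by fun_prop) (by fun_prop)]
  simp only [← Real.exp_sum, Finset.mul_sum, mul_assoc]

lemma mgf_weighted_sq_le (hw : ∀ j, 0 ≤ w j) (hL : ∀ j, w j ≤ L) (hs : ∀ j, s * w j ≤ 1 / 4) :
    mgf (fun z => ∑ j, w j * z j ^ 2) (ProbabilityTheory.stdGaussian (EuclideanSpace ℝ κ)) s ≤
      Real.exp ((s + 2 * s ^ 2 * L) * ∑ j, w j) := by
  rw [mgf_weighted_sq, Finset.mul_sum, Real.exp_sum]
  refine Finset.prod_le_prod (fun j _ => integral_nonneg fun _ => (Real.exp_pos _).le) fun j _ => ?_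
  refine (integral_exp_mul_sq_gaussianReal_le (hs j)).trans (Real.exp_le_exp.2 ?_)
  nlinarith [mul_nonneg (sq_nonneg s) (mul_nonneg (hw j) (sub_nonneg.2 (hL j)))]

lemma stdGaussian_real_weighted_sq_ge_le (hw : ∀ j, 0 ≤ w j) (hL : ∀ j, w j ≤ L) (hL0 : 0 < L)
    (t : ℝ) :
    (ProbabilityTheory.stdGaussian (EuclideanSpace ℝ κ)).real
      {z | 2 * ∑ j, w j + 4 * L * t ≤ ∑ j, w j * z j ^ 2} ≤ Real.exp (-t) := by
  have hs : ∀ j, 1 / (4 * L) * w j ≤ 1 / 4 := fun j => by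
    rw [div_mul_eq_mul_div, div_le_div_iff₀ (by positivity) (by norm_num)]
    linarith [hL j]
  have hW : 0 ≤ ∑ j, w j := Finset.sum_nonneg fun j _ => hw j
  have hW' : 0 ≤ (∑ j, w j) / (8 * L) := by positivity
  calc _ ≤ Real.exp (-(1 / (4 * L)) * (2 * ∑ j, w j + 4 * L * t)) *
        Real.exp ((1 / (4 * L) + 2 * (1 / (4 * L)) ^ 2 * L) * ∑ j, w j) :=
        (measure_ge_le_exp_mul_mgf _ (by positivity) (integrable_exp_mul_weighted_sq hs)).trans
          (mul_le_mul_of_nonneg_left (mgf_weighted_sq_le hw hL hs) (Real.exp_pos _).le)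
    _ = Real.exp (-t - (∑ j, w j) / (8 * L)) := by
        rw [← Real.exp_add]
        congr 1
        field_simp
        ring
    _ ≤ Real.exp (-t) := Real.exp_le_exp.2 (by linarith)

lemma stdGaussian_real_weighted_sq_le_le (hw : ∀ j, 0 ≤ w j) (hL : ∀ j, w j ≤ L) (hL0 : 0 < L)
    {ε : ℝ} (hε : 0 ≤ ε) :
    (ProbabilityTheory.stdGaussian (EuclideanSpace ℝ κ)).real
      {z | ∑ j, w j * z j ^ 2 ≤ (1 - ε) * ∑ j, w j} ≤
        Real.exp (-(ε ^ 2 * (∑ j, w j) / (8 * L))) := by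
  have hs0 : -(ε / (4 * L)) ≤ 0 := neg_nonpos.2 (by positivity)
  have hs : ∀ j, -(ε / (4 * L)) * w j ≤ 1 / 4 := fun j =>
    (mul_nonpos_of_nonpos_of_nonneg hs0 (hw j)).trans (by norm_num)
  calc _ ≤ Real.exp (-(-(ε / (4 * L))) * ((1 - ε) * ∑ j, w j)) *
        Real.exp ((-(ε / (4 * L)) + 2 * (-(ε / (4 * L))) ^ 2 * L) * ∑ j, w j) :=
        (measure_le_le_exp_mul_mgf _ hs0 (integrable_exp_mul_weighted_sq hs)).trans
          (mul_le_mul_of_nonneg_left (mgf_weighted_sq_le hw hL hs) (Real.exp_pos _).le)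
    _ = Real.exp (-(ε ^ 2 * (∑ j, w j) / (8 * L))) := by
        rw [← Real.exp_add]
        congr 1
        field_simp
        ring

end ChiSquare

section Net

open scoped NNReal

lemma exists_norm_sub_le_of_isCover_sphere {E : Type*} [SeminormedAddCommGroup E] {ε : ℝ≥0}
    {T : Set E} (hT : Metric.IsCover ε (Metric.sphere 0 1) T) {v : E} (hv : ‖v‖ = 1) :
    ∃ t ∈ T, ‖v - t‖ ≤ ε := by
  simpa only [Set.mem_iUnion₂, mem_closedBall_iff_norm, exists_prop] using
    Metric.isCover_iff_subset_iUnion_closedBall.1 hT (mem_sphere_zero_iff_norm.2 hv)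

variable {E F : Type*} [NormedAddCommGroup E] [NormedSpace ℝ E] [NormedAddCommGroup F]
  [NormedSpace ℝ F]

section FiniteDimensional

variable [FiniteDimensional ℝ E]

lemma addHaar_real_ball_of_pos [MeasurableSpace E] [BorelSpace E] (μ : Measure E)
    [μ.IsAddHaarMeasure] (x : E) {r : ℝ} (hr : 0 < r) :
    μ.real (Metric.ball x r) = r ^ Module.finrank ℝ E * μ.real (Metric.ball 0 1) := by
  rw [Measure.real, μ.addHaar_ball_of_pos x hr, ENNReal.toReal_mul,
    ENNReal.toReal_ofReal (by positivity), Measure.real]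

/- Volume argument: the balls of radius `ε / 2` around the points of `s` are disjoint and lie in the
ball of radius `1 + ε / 2`. -/
lemma card_le_of_isSeparated_of_norm_le_one {ε : ℝ≥0} (hε : 0 < ε) {s : Finset E}
    (hs : ∀ c ∈ s, ‖c‖ ≤ 1) (hsep : Metric.IsSeparated ε (s : Set E)) :
    (s.card : ℝ) ≤ (1 + 2 / ε) ^ Module.finrank ℝ E := by
  borelize E
  set d := Module.finrank ℝ E
  let μ : Measure E := Measure.addHaar
  have hε' : (0 : ℝ) < ε := by exact_mod_cast hε
  have hdisj : (s : Set E).PairwiseDisjoint fun c => Metric.ball c (ε / 2 : ℝ) := by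
    intro c hc d hd hcd
    refine Metric.ball_disjoint_ball ?_
    have hlt : (ε : ℝ≥0∞) < edist c d := hsep hc hd hcd
    rw [edist_nndist, ENNReal.coe_lt_coe, ← NNReal.coe_lt_coe, coe_nndist] at hlt
    linarith
  have hsub : ⋃ c ∈ s, Metric.ball c (ε / 2 : ℝ) ⊆ Metric.ball 0 (1 + ε / 2) := by
    refine Set.iUnion₂_subset fun c hc => Metric.ball_subset_ball' ?_
    rw [dist_zero_right, add_comm]
    exact add_le_add_left (hs c hc) _
  have hvol : (s.card : ℝ) * (ε / 2 : ℝ) ^ d * μ.real (Metric.ball 0 1) ≤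
      (1 + ε / 2 : ℝ) ^ d * μ.real (Metric.ball 0 1) := by
    calc (s.card : ℝ) * (ε / 2 : ℝ) ^ d * μ.real (Metric.ball 0 1)
        = μ.real (⋃ c ∈ s, Metric.ball c (ε / 2 : ℝ)) := by
          rw [measureReal_biUnion_finset hdisj fun c _ => Metric.isOpen_ball.measurableSet]
          simp only [addHaar_real_ball_of_pos μ _ (half_pos hε'), Finset.sum_const, nsmul_eq_mul,
            mul_assoc, d]
      _ ≤ μ.real (Metric.ball 0 (1 + ε / 2 : ℝ)) :=
          measureReal_mono hsub measure_ball_lt_top.ne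
      _ = (1 + ε / 2 : ℝ) ^ d * μ.real (Metric.ball 0 1) :=
          addHaar_real_ball_of_pos μ _ (by positivity)
  have hcard := le_of_mul_le_mul_right hvol
    (ENNReal.toReal_pos (Metric.measure_ball_pos _ _ one_pos).ne' measure_ball_lt_top.ne)
  calc (s.card : ℝ) ≤ (1 + ε / 2 : ℝ) ^ d / (ε / 2 : ℝ) ^ d := (le_div_iff₀ (by positivity)).2 hcard
    _ = (1 + 2 / ε) ^ d := by
        rw [← div_pow]
        congr 1
        field_simp
        ring

variable (E) in
lemma exists_finset_isCover_sphere {ε : ℝ≥0} (hε : 0 < ε) :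
    ∃ T : Finset E, (T.card : ℝ) ≤ (1 + 2 / ε) ^ Module.finrank ℝ E ∧ (∀ t ∈ T, ‖t‖ = 1) ∧
      Metric.IsCover ε (Metric.sphere (0 : E) 1) T := by
  have hfin : Metric.packingNumber ε (Metric.sphere (0 : E) 1) ≠ ⊤ := by
    obtain ⟨N, -, hN, hcov⟩ := Metric.exists_finite_isCover_of_isCompact
      (half_pos hε).ne' (isCompact_sphere (0 : E) 1)
    have hle := (Metric.packingNumber_two_mul_le_externalCoveringNumber (ε / 2) _).trans
      hcov.externalCoveringNumber_le_encard
    rw [mul_div_cancel₀ ε two_ne_zero] at hle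
    exact (hle.trans_lt hN.encard_lt_top).ne
  obtain ⟨T, hT⟩ := (Set.encard_ne_top_iff.1
    ((Metric.encard_maximalSeparatedSet hfin).trans_ne hfin)).exists_finset_coe
  have hunit : ∀ t ∈ T, ‖t‖ = 1 := fun t ht => by
    have hmem : t ∈ Metric.maximalSeparatedSet ε (Metric.sphere (0 : E) 1) := hT ▸ ht
    exact mem_sphere_zero_iff_norm.1 (Metric.maximalSeparatedSet_subset hmem)
  exact ⟨T, card_le_of_isSeparated_of_norm_le_one hε (fun t ht => (hunit t ht).le)
    (hT ▸ Metric.isSeparated_maximalSeparatedSet), hunit,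
    hT ▸ Metric.isCover_maximalSeparatedSet hfin⟩

end FiniteDimensional

variable {ε : ℝ≥0} {T : Set E}

lemma opNorm_le_div_of_isCover_sphere (hε : ε < 1)
    (hT : Metric.IsCover ε (Metric.sphere (0 : E) 1) T) (A : E →L[ℝ] F) {M : ℝ} (hM : 0 ≤ M)
    (h : ∀ t ∈ T, ‖A t‖ ≤ M) : ‖A‖ ≤ M / (1 - ε) := by
  have hself : ‖A‖ ≤ M + ‖A‖ * ε := by
    refine A.opNorm_le_of_unit_norm (by positivity) fun v hv => ?_
    obtain ⟨t, ht, hvt⟩ := exists_norm_sub_le_of_isCover_sphere hT hv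
    calc ‖A v‖ = ‖A t + A (v - t)‖ := by rw [← map_add, add_sub_cancel]
      _ ≤ ‖A t‖ + ‖A (v - t)‖ := norm_add_le _ _
      _ ≤ M + ‖A‖ * ε := add_le_add (h t ht) (A.le_opNorm_of_le hvt)
  rw [le_div_iff₀ (sub_pos.2 (by exact_mod_cast hε))]
  linarith

lemma sub_mul_le_norm_of_isCover_sphere (hT : Metric.IsCover ε (Metric.sphere (0 : E) 1) T)
    (A : E →L[ℝ] F) {m : ℝ} (h : ∀ t ∈ T, m ≤ ‖A t‖) (v : E) : (m - ‖A‖ * ε) * ‖v‖ ≤ ‖A v‖ := by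
  rcases eq_or_ne v 0 with rfl | hv
  · simp
  set u := ‖v‖⁻¹ • v with hu
  obtain ⟨t, ht, hut⟩ :=
    exists_norm_sub_le_of_isCover_sphere hT (norm_smul_inv_norm (𝕜 := ℝ) hv : ‖u‖ = 1)
  have hAt : ‖A t‖ ≤ ‖A u‖ + ‖A‖ * ε := by
    calc ‖A t‖ = ‖A u - A (u - t)‖ := by rw [← map_sub, sub_sub_cancel]
      _ ≤ ‖A u‖ + ‖A‖ * ε := (norm_sub_le _ _).trans (add_le_add le_rfl (A.le_opNorm_of_le hut))
  calc (m - ‖A‖ * ε) * ‖v‖ ≤ ‖A u‖ * ‖v‖ := by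
        gcongr
        linarith [h t ht]
    _ = ‖A v‖ := by
        rw [hu, map_smul, norm_smul, norm_inv, norm_norm, mul_comm, mul_inv_cancel_left₀]
        exact norm_ne_zero_iff.2 hv

lemma sub_div_mul_le_norm_of_isCover_sphere (hε : ε < 1)
    (hT : Metric.IsCover ε (Metric.sphere (0 : E) 1) T) (A : E →L[ℝ] F) {m M : ℝ} (hM : 0 ≤ M)
    (hAm : ∀ t ∈ T, m ≤ ‖A t‖) (hAM : ∀ t ∈ T, ‖A t‖ ≤ M) (v : E) :
    (m - M / (1 - ε) * ε) * ‖v‖ ≤ ‖A v‖ := by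
  refine le_trans ?_ (sub_mul_le_norm_of_isCover_sphere hT A hAm v)
  gcongr
  exact opNorm_le_div_of_isCover_sphere hε hT A hM hAM

end Net

section IsotropicGaussian

variable {Ω E F H κ : Type*} [MeasurableSpace Ω] {μ : Measure Ω}
  [NormedAddCommGroup E] [NormedSpace ℝ E] [Fintype κ]
  [NormedAddCommGroup F] [InnerProductSpace ℝ F] [FiniteDimensional ℝ F] [MeasurableSpace F]
  [NormedAddCommGroup H] [NormedSpace ℝ H]

/-- The random operator `Γ` from `E` to `F` is isotropic Gaussian if it sends each unit vector to a
standard Gaussian vector of `F`. A standard Gaussian matrix and its transpose are the examples of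
interest; independence of the images of orthogonal vectors is not part of the definition because
union bounds over nets of the sphere do not need it. -/
def IsIsotropicGaussian (μ : Measure Ω) (Γ : Ω → E →L[ℝ] F) : Prop :=
  ∀ v, ‖v‖ = 1 → HasLaw (fun ω => Γ ω v) (ProbabilityTheory.stdGaussian F) μ

namespace IsIsotropicGaussian

lemma comp_linearIsometry {E' : Type*} [NormedAddCommGroup E'] [NormedSpace ℝ E']
    {Γ : Ω → E →L[ℝ] F} (hΓ : IsIsotropicGaussian μ Γ) (V : E' →ₗᵢ[ℝ] E) :
    IsIsotropicGaussian μ fun ω => Γ ω ∘L V.toContinuousLinearMap :=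
  fun v hv => hΓ (V v) ((V.norm_map v).trans hv)

variable [BorelSpace F]

lemma linearIsometryEquiv_comp {F' : Type*} [NormedAddCommGroup F'] [InnerProductSpace ℝ F']
    [FiniteDimensional ℝ F'] [MeasurableSpace F'] [BorelSpace F'] {Γ : Ω → E →L[ℝ] F}
    (hΓ : IsIsotropicGaussian μ Γ) (V : F ≃ₗᵢ[ℝ] F') :
    IsIsotropicGaussian μ fun ω => (V : F →L[ℝ] F') ∘L Γ ω :=
  fun v hv => (HasLaw.mk (by fun_prop) (stdGaussian_map V)).comp (hΓ v hv)

lemma real_exists_mem_le {Γ : Ω → E →L[ℝ] F} (hΓ : IsIsotropicGaussian μ Γ) {T : Finset E}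
    (hT : ∀ t ∈ T, ‖t‖ = 1) (S : Set F) :
    μ.real {ω | ∃ t ∈ T, Γ ω t ∈ S} ≤ T.card * (ProbabilityTheory.stdGaussian F).real S := by
  have hset : {ω | ∃ t ∈ T, Γ ω t ∈ S} = ⋃ t ∈ T, (fun ω => Γ ω t) ⁻¹' S := by
    ext ω
    simp only [Set.mem_ofPred_eq, Set.mem_iUnion₂, Set.mem_preimage, exists_prop]
  rw [hset, ← nsmul_eq_mul]
  refine (measureReal_biUnion_finset_le _ _).trans (Finset.sum_le_card_nsmul _ _ _ fun t ht => ?_)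
  have hlaw := hΓ t (hT t ht)
  rw [← hlaw.map_eq]
  have := hlaw.isFiniteMeasure
  exact ENNReal.toReal_mono (measure_ne_top _ _) (Measure.le_map_apply hlaw.aemeasurable S)

lemma real_exists_mem_le_exp {N : ℝ} {Γ : Ω → E →L[ℝ] F} (hΓ : IsIsotropicGaussian μ Γ)
    {T : Finset E} (hT : ∀ t ∈ T, ‖t‖ = 1) (hcard : (T.card : ℝ) ≤ 9 ^ Module.finrank ℝ E)
    (hN : (Module.finrank ℝ E : ℝ) ≤ N) {S : Set F}
    (hS : (ProbabilityTheory.stdGaussian F).real S ≤ Real.exp (-(4 * N))) :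
    μ.real {ω | ∃ t ∈ T, Γ ω t ∈ S} ≤ Real.exp (-N) := by
  have hnine : (9 : ℝ) ≤ Real.exp 3 := by
    calc (9 : ℝ) ≤ 2.7 ^ 3 := by norm_num
      _ ≤ Real.exp 1 ^ 3 := by
        gcongr
        linarith [Real.exp_one_gt_d9]
      _ = Real.exp 3 := by rw [← Real.exp_nat_mul]; norm_num
  have hcard' : (T.card : ℝ) ≤ Real.exp (3 * N) := by
    calc (T.card : ℝ) ≤ 9 ^ Module.finrank ℝ E := hcard
      _ ≤ Real.exp 3 ^ Module.finrank ℝ E := by gcongr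
      _ = Real.exp (Module.finrank ℝ E * 3) := by rw [Real.exp_nat_mul]
      _ ≤ Real.exp (3 * N) := by
        rw [Real.exp_le_exp]
        linarith
  calc μ.real {ω | ∃ t ∈ T, Γ ω t ∈ S}
      ≤ T.card * (ProbabilityTheory.stdGaussian F).real S := hΓ.real_exists_mem_le hT S
    _ ≤ Real.exp (3 * N) * Real.exp (-(4 * N)) := by gcongr
    _ = Real.exp (-N) := by
        rw [← Real.exp_add]
        congr 1
        ring

variable [IsFiniteMeasure μ] [FiniteDimensional ℝ E] {Γ : Ω → E →L[ℝ] EuclideanSpace ℝ κ}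
  {w : κ → ℝ} {L N : ℝ} {D : EuclideanSpace ℝ κ →L[ℝ] H}

lemma real_lt_sq_opNorm_le (hΓ : IsIsotropicGaussian μ Γ) (hw : ∀ j, 0 ≤ w j)
    (hL : ∀ j, w j ≤ L) (hL0 : 0 < L) (hD : ∀ z, ‖D z‖ ^ 2 = ∑ j, w j * z j ^ 2)
    (hN : (Module.finrank ℝ E : ℝ) ≤ N) :
    μ.real {ω | 4 * ∑ j, w j + 32 * L * N < ‖D ∘L Γ ω‖ ^ 2} ≤ Real.exp (-N) := by
  obtain ⟨T, hcard, hunit, hT⟩ := exists_finset_isCover_sphere E (ε := 1 / 4) (by norm_num)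
  norm_num at hcard
  have hN0 : 0 ≤ N := (Nat.cast_nonneg _).trans hN
  have hw0 : 0 ≤ ∑ j, w j := Finset.sum_nonneg fun j _ => hw j
  refine (measureReal_mono fun ω hω => ?_).trans (hΓ.real_exists_mem_le_exp hunit hcard hN
    (stdGaussian_real_weighted_sq_ge_le hw hL hL0 (4 * N)))
  by_contra! hnet
  refine (not_le.2 (Set.mem_ofPred_eq.mp hω)) ?_
  set M := √(2 * ∑ j, w j + 4 * L * (4 * N))
  have hM : M ^ 2 = 2 * ∑ j, w j + 4 * L * (4 * N) := Real.sq_sqrt (by positivity)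
  have hnet' : ∀ t ∈ T, ‖(D ∘L Γ ω) t‖ ≤ M := fun t ht => by
    refine Real.le_sqrt_of_sq_le ?_
    rw [ContinuousLinearMap.comp_apply, hD]
    exact (not_le.1 fun h => hnet ⟨t, ht, h⟩).le
  have hop : ‖D ∘L Γ ω‖ ≤ 4 / 3 * M :=
    (opNorm_le_div_of_isCover_sphere (by norm_num) hT _ (Real.sqrt_nonneg _) hnet').trans_eq
      (by norm_num [M]; ring)
  calc ‖D ∘L Γ ω‖ ^ 2 ≤ (4 / 3 * M) ^ 2 := by gcongr
    _ = 16 / 9 * (2 * ∑ j, w j + 4 * L * (4 * N)) := by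
        rw [mul_pow, hM]
        norm_num
    _ ≤ 4 * ∑ j, w j + 32 * L * N := by nlinarith [mul_nonneg hL0.le hN0]

lemma real_not_forall_le_norm_le (hΓ : IsIsotropicGaussian μ Γ) (hw : ∀ j, 0 ≤ w j)
    (hL : ∀ j, w j ≤ L) (hL0 : 0 < L) (hD : ∀ z, ‖D z‖ ^ 2 = ∑ j, w j * z j ^ 2)
    (hN : (Module.finrank ℝ E : ℝ) ≤ N) (hR : 1024 * N * L ≤ ∑ j, w j) :
    μ.real {ω | ¬ ∀ v, √(∑ j, w j) / 4 * ‖v‖ ≤ ‖D (Γ ω v)‖} ≤ 2 * Real.exp (-N) := by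
  obtain ⟨T, hcard, hunit, hT⟩ := exists_finset_isCover_sphere E (ε := 1 / 4) (by norm_num)
  norm_num at hcard
  have hN0 : 0 ≤ N := (Nat.cast_nonneg _).trans hN
  have hLN : 0 ≤ N * L := by positivity
  have hw0 : 0 ≤ ∑ j, w j := Finset.sum_nonneg fun j _ => hw j
  have hlow := hΓ.real_exists_mem_le_exp hunit hcard hN
    ((stdGaussian_real_weighted_sq_le_le hw hL hL0 (by norm_num : (0 : ℝ) ≤ 7 / 16)).trans
      (Real.exp_le_exp.2 (neg_le_neg ((le_div_iff₀ (by positivity)).2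
        (by nlinarith : 4 * N * (8 * L) ≤ (7 / 16) ^ 2 * ∑ j, w j)))))
  have hupp := hΓ.real_exists_mem_le_exp hunit hcard hN
    (stdGaussian_real_weighted_sq_ge_le hw hL hL0 (4 * N))
  rw [two_mul]
  refine (measureReal_mono fun ω hω => ?_).trans
    ((measureReal_union_le _ _).trans (add_le_add hlow hupp))
  by_contra hnet
  simp only [Set.mem_union, Set.mem_ofPred_eq, not_or, not_exists, not_and, not_le] at hnet
  set R := ∑ j, w j
  have hR2 : √R ^ 2 = R := Real.sq_sqrt hw0
  have hlow' : ∀ t ∈ T, 3 / 4 * √R ≤ ‖(D ∘L Γ ω) t‖ := fun t ht => by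
    refine (abs_le_of_sq_le_sq' ?_ (norm_nonneg _)).2
    rw [ContinuousLinearMap.comp_apply, hD, mul_pow, hR2]
    linarith [hnet.1 t ht]
  have hupp' : ∀ t ∈ T, ‖(D ∘L Γ ω) t‖ ≤ 29 / 20 * √R := fun t ht => by
    refine (abs_le_of_sq_le_sq' ?_ (by positivity)).2
    rw [ContinuousLinearMap.comp_apply, hD, mul_pow, hR2]
    linarith [hnet.2 t ht]
  refine hω fun v => le_trans ?_
    (sub_div_mul_le_norm_of_isCover_sphere (by norm_num) hT _ (by positivity) hlow' hupp' v)
  gcongr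
  norm_num
  linarith [Real.sqrt_nonneg R]

end IsIsotropicGaussian

end IsotropicGaussian

section MatrixOperator

variable {ι κ τ : Type*} [Fintype ι] [Fintype κ] [Fintype τ] [DecidableEq κ]

/-- The operator between Euclidean spaces given by a rectangular matrix; for square matrices this is
`Matrix.toEuclideanCLM`. -/
def euclideanCLM (M : Matrix ι κ ℝ) : EuclideanSpace ℝ κ →L[ℝ] EuclideanSpace ℝ ι :=
  LinearMap.toContinuousLinearMap (Matrix.toEuclideanLin M)

lemma euclideanCLM_apply (M : Matrix ι κ ℝ) (x : EuclideanSpace ℝ κ) :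
    euclideanCLM M x = WithLp.toLp 2 (M *ᵥ x.ofLp) := rfl

lemma euclideanCLM_mul [DecidableEq τ] (M : Matrix ι κ ℝ) (N : Matrix κ τ ℝ) :
    euclideanCLM (M * N) = euclideanCLM M ∘L euclideanCLM N := by
  ext1 x
  simp only [ContinuousLinearMap.comp_apply, euclideanCLM_apply, Matrix.mulVec_mulVec]

lemma adjoint_euclideanCLM [DecidableEq ι] (M : Matrix ι κ ℝ) :
    ContinuousLinearMap.adjoint (euclideanCLM M) = euclideanCLM Mᵀ := by
  rw [euclideanCLM, euclideanCLM, ← Matrix.conjTranspose_eq_transpose_of_trivial,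
    Matrix.toEuclideanLin_conjTranspose_eq_adjoint, LinearMap.adjoint_toContinuousLinearMap]

lemma continuous_euclideanCLM_apply (x : EuclideanSpace ℝ κ) :
    Continuous fun M : Matrix ι κ ℝ => euclideanCLM M x := by
  simp only [euclideanCLM_apply]
  fun_prop

lemma finrank_range_euclideanCLM (M : Matrix ι κ ℝ) :
    Module.finrank ℝ (euclideanCLM M).range = M.rank := by
  rw [M.rank_eq_finrank_range_toLin (EuclideanSpace.basisFun ι ℝ).toBasis
    (EuclideanSpace.basisFun κ ℝ).toBasis]
  rfl

end MatrixOperator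

section GaussianMatrix

open scoped RealInnerProductSpace

variable {E F : Type*} [NormedAddCommGroup E] [InnerProductSpace ℝ E] [FiniteDimensional ℝ E]
  [MeasurableSpace E] [BorelSpace E] [NormedAddCommGroup F] [InnerProductSpace ℝ F]
  [FiniteDimensional ℝ F] [MeasurableSpace F] [BorelSpace F]

lemma map_stdGaussian_of_inner_eq {T : E → F} (hT : Measurable T) {S : F → E}
    (hTS : ∀ x y, ⟪T x, y⟫ = ⟪x, S y⟫) (hS : ∀ y, ‖S y‖ = ‖y‖) :
    (ProbabilityTheory.stdGaussian E).map T = ProbabilityTheory.stdGaussian F := by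
  refine Measure.ext_of_charFun (funext fun y => ?_)
  calc charFun ((ProbabilityTheory.stdGaussian E).map T) y
      = charFun (ProbabilityTheory.stdGaussian E) (S y) := by
        rw [charFun_apply, charFun_apply, integral_map hT.aemeasurable (by fun_prop)]
        simp only [hTS]
    _ = charFun (ProbabilityTheory.stdGaussian F) y := by
        rw [charFun_stdGaussian, charFun_stdGaussian, hS]

variable {ι κ : Type*} [Fintype ι] [Fintype κ]

/-- The tensor `v ⊗ u`, as a vector indexed by the entries of a matrix. -/
def outerProduct (v : EuclideanSpace ℝ ι) (u : EuclideanSpace ℝ κ) : EuclideanSpace ℝ (ι × κ) :=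
  WithLp.toLp 2 fun q => v q.1 * u q.2

lemma norm_outerProduct (v : EuclideanSpace ℝ ι) (u : EuclideanSpace ℝ κ) :
    ‖outerProduct v u‖ = ‖v‖ * ‖u‖ := by
  rw [← sq_eq_sq₀ (norm_nonneg _) (by positivity), mul_pow, EuclideanSpace.real_norm_sq_eq,
    EuclideanSpace.real_norm_sq_eq, EuclideanSpace.real_norm_sq_eq, Finset.sum_mul_sum,
    Fintype.sum_prod_type]
  simp only [outerProduct, mul_pow]

lemma inner_euclideanCLM_curry [DecidableEq κ] (z : EuclideanSpace ℝ (ι × κ))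
    (u : EuclideanSpace ℝ κ) (v : EuclideanSpace ℝ ι) :
    ⟪euclideanCLM (Matrix.of (Function.curry z.ofLp)) u, v⟫ = ⟪z, outerProduct v u⟫ := by
  simp only [PiLp.inner_apply, Real.inner_apply, euclideanCLM_apply, Matrix.mulVec, dotProduct,
    outerProduct, Fintype.sum_prod_type, Finset.sum_mul, Matrix.of_apply, Function.curry_apply]
  exact Finset.sum_congr rfl fun i _ => Finset.sum_congr rfl fun j _ => by ring

/-- The law of a matrix with independent standard Gaussian entries. -/
def gaussianMatrix (ι κ : Type*) [Fintype ι] [Fintype κ] : Measure (ι → κ → ℝ) :=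
  Measure.pi fun _ => Measure.pi fun _ => gaussianReal 0 1

instance : IsProbabilityMeasure (gaussianMatrix ι κ) := by
  unfold gaussianMatrix
  infer_instance

lemma map_curry_stdGaussian :
    (ProbabilityTheory.stdGaussian (EuclideanSpace ℝ (ι × κ))).map
      (fun z => Function.curry z.ofLp) = gaussianMatrix ι κ := by
  have hcurry := Measure.infinitePi_map_curry (ι := ι) (κ := κ) fun _ _ => gaussianReal 0 1
  simp only [Measure.infinitePi_eq_pi] at hcurry
  rw [← map_pi_eq_stdGaussian, Measure.map_map (by fun_prop) (by fun_prop), gaussianMatrix,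
    ← hcurry]
  rfl

lemma hasLaw_gaussianMatrix_of_inner_eq {T : (ι → κ → ℝ) → F} (hT : Continuous T)
    {S : F → EuclideanSpace ℝ (ι × κ)}
    (hTS : ∀ z y, ⟪T (Function.curry (WithLp.ofLp z)), y⟫ = ⟪z, S y⟫) (hS : ∀ y, ‖S y‖ = ‖y‖) :
    HasLaw T (ProbabilityTheory.stdGaussian F) (gaussianMatrix ι κ) where
  aemeasurable := hT.measurable.aemeasurable
  map_eq := by
    rw [← map_curry_stdGaussian, Measure.map_map hT.measurable (by fun_prop)]
    exact map_stdGaussian_of_inner_eq (hT.measurable.comp (by fun_prop)) hTS hS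

variable [DecidableEq κ]

lemma isIsotropicGaussian_euclideanCLM :
    IsIsotropicGaussian (gaussianMatrix ι κ) fun Z => euclideanCLM (Matrix.of Z) :=
  fun u hu => hasLaw_gaussianMatrix_of_inner_eq (continuous_euclideanCLM_apply u)
    (fun z v => inner_euclideanCLM_curry z u v) fun v => by rw [norm_outerProduct, hu, mul_one]

lemma isIsotropicGaussian_adjoint_euclideanCLM :
    IsIsotropicGaussian (gaussianMatrix ι κ) fun Z =>
      ContinuousLinearMap.adjoint (euclideanCLM (Matrix.of Z)) := by
  intro v hv
  refine hasLaw_gaussianMatrix_of_inner_eq (S := outerProduct v) ?_ (fun z u => ?_) fun u => ?_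
  · simp only [adjoint_euclideanCLM]
    exact (continuous_euclideanCLM_apply v).comp continuous_id.matrix_transpose
  · rw [ContinuousLinearMap.adjoint_inner_left, real_inner_comm, inner_euclideanCLM_curry]
  · rw [norm_outerProduct, hv, one_mul]

end GaussianMatrix

section MinNorm

variable {E F H : Type*} [NormedAddCommGroup E] [InnerProductSpace ℝ E] [CompleteSpace E]
  [NormedAddCommGroup F] [InnerProductSpace ℝ F]
  [NormedAddCommGroup H] [NormedSpace ℝ H] {A : E →L[ℝ] F} {s r t : ℝ} {b β : E}

lemma mem_orthogonal_ker_of_norm_min (hb : ∀ b', A b' = A b → ‖b‖ ≤ ‖b'‖) : b ∈ A.kerᗮ := by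
  have hproj : A (A.ker.starProjection b) = 0 := A.ker.starProjection_apply_mem b
  have hle : ‖b‖ ≤ ‖A.kerᗮ.starProjection b‖ := hb _ <| by
    rw [Submodule.starProjection_orthogonal_val, map_sub, hproj, sub_zero]
  have hzero : A.ker.starProjection b = 0 := by
    rw [← norm_eq_zero, ← sq_eq_zero_iff]
    nlinarith [Submodule.norm_sq_eq_add_norm_sq_starProjection b A.ker, norm_nonneg b]
  have hsub := A.ker.sub_starProjection_mem_orthogonal b
  rwa [hzero, sub_zero] at hsub

variable [CompleteSpace F]

lemma mul_norm_le_norm_map_of_mem_orthogonal_ker (hs : 0 ≤ s)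
    (hA : ∀ v, s * ‖v‖ ≤ ‖ContinuousLinearMap.adjoint A v‖) {x : E} (hx : x ∈ A.kerᗮ) :
    s * ‖x‖ ≤ ‖A x‖ := by
  rw [ContinuousLinearMap.orthogonal_ker, ← SetLike.mem_coe,
    Submodule.topologicalClosure_coe] at hx
  refine closure_minimal (t := {x | s * ‖x‖ ≤ ‖A x‖}) ?_
    (isClosed_le (by fun_prop) (by fun_prop)) hx
  rintro _ ⟨v, rfl⟩
  set x := ContinuousLinearMap.adjoint A v with hxv
  change s * ‖x‖ ≤ ‖A x‖
  have hnorm : ‖x‖ * ‖x‖ ≤ ‖v‖ * ‖A x‖ := by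
    rw [← real_inner_self_eq_norm_mul_norm]
    nth_rw 1 [hxv]
    rw [ContinuousLinearMap.adjoint_inner_left]
    exact real_inner_le_norm v (A x)
  rcases (norm_nonneg x).eq_or_lt with hx0 | hx0
  · rw [← hx0, mul_zero]
    exact norm_nonneg _
  · refine le_of_mul_le_mul_right ?_ hx0
    calc s * ‖x‖ * ‖x‖ = s * (‖x‖ * ‖x‖) := mul_assoc _ _ _
      _ ≤ s * (‖v‖ * ‖A x‖) := by gcongr
      _ = s * ‖v‖ * ‖A x‖ := (mul_assoc _ _ _).symm
      _ ≤ ‖x‖ * ‖A x‖ := by gcongr; exact hA v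
      _ = ‖A x‖ * ‖x‖ := mul_comm _ _

lemma norm_sub_le_of_norm_min (hs : 0 < s)
    (hA : ∀ v, s * ‖v‖ ≤ ‖ContinuousLinearMap.adjoint A v‖)
    (hb : ∀ b', A b' = A b → ‖b‖ ≤ ‖b'‖) : ‖b - β‖ ≤ ‖β‖ + ‖A (b - β)‖ / s := by
  have hproj : A (A.ker.starProjection β) = 0 := A.ker.starProjection_apply_mem β
  set x := b - A.kerᗮ.starProjection β with hx
  have hdecomp : x = b - β + A.ker.starProjection β := by
    rw [hx, Submodule.starProjection_orthogonal_val]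
    abel
  have hAx : A x = A (b - β) := by rw [hdecomp, map_add, hproj, add_zero]
  have hxnorm : ‖x‖ ≤ ‖A (b - β)‖ / s := by
    rw [le_div_iff₀ hs, mul_comm, ← hAx]
    exact mul_norm_le_norm_map_of_mem_orthogonal_ker hs.le hA <|
      Submodule.sub_mem _ (mem_orthogonal_ker_of_norm_min hb)
        (Submodule.starProjection_apply_mem _ _)
  calc ‖b - β‖ = ‖x - A.ker.starProjection β‖ := by rw [hdecomp, add_sub_cancel_right]
    _ ≤ ‖x‖ + ‖A.ker.starProjection β‖ := norm_sub_le _ _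
    _ ≤ ‖A (b - β)‖ / s + ‖β‖ := add_le_add hxnorm (Submodule.norm_starProjection_apply_le _ _)
    _ = ‖β‖ + ‖A (b - β)‖ / s := add_comm _ _

/-- The two properties of a design operator `A` that control the minimum norm interpolator: the
smallest singular value of its adjoint is at least `s`, and `A` is bounded below by `t` relative to
the prediction seminorm `‖S ·‖` on the cone `r ‖h‖ ≤ ‖S h‖`. -/
structure IsGoodDesign (A : E →L[ℝ] F) (S : E →L[ℝ] H) (s r t : ℝ) : Prop where
  mul_norm_le_norm_adjoint : ∀ v, s * ‖v‖ ≤ ‖ContinuousLinearMap.adjoint A v‖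
  mul_norm_le_norm_apply : ∀ h, r * ‖h‖ ≤ ‖S h‖ → t * ‖S h‖ ≤ ‖A h‖

namespace IsGoodDesign

variable {S : E →L[ℝ] H}

lemma norm_sub_le (hA : IsGoodDesign A S s r t) (hs : 0 < s)
    (hb : ∀ b', A b' = A b → ‖b‖ ≤ ‖b'‖) : ‖b - β‖ ≤ ‖β‖ + ‖A (b - β)‖ / s :=
  norm_sub_le_of_norm_min hs hA.mul_norm_le_norm_adjoint hb

lemma norm_map_sub_le (hA : IsGoodDesign A S s r t) (hs : 0 < s) (hr : 0 ≤ r) (ht : 0 < t)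
    (hb : ∀ b', A b' = A b → ‖b‖ ≤ ‖b'‖) :
    ‖S (b - β)‖ ≤ max ((‖β‖ + ‖A (b - β)‖ / s) * r) (‖A (b - β)‖ / t) := by
  rcases le_total ‖S (b - β)‖ (r * ‖b - β‖) with hout | hcone
  · refine le_max_of_le_left (hout.trans ?_)
    rw [mul_comm]
    gcongr
    exact hA.norm_sub_le hs hb
  · refine le_max_of_le_right ((le_div_iff₀ ht).2 ?_)
    rw [mul_comm]
    exact hA.mul_norm_le_norm_apply _ hcone

lemma comp_linearIsometryEquiv {E' : Type*} [NormedAddCommGroup E'] [InnerProductSpace ℝ E']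
    [CompleteSpace E'] (hA : IsGoodDesign A S s r t) (V : E' ≃ₗᵢ[ℝ] E) :
    IsGoodDesign (A ∘L (V : E' →L[ℝ] E)) (S ∘L (V : E' →L[ℝ] E)) s r t where
  mul_norm_le_norm_adjoint v := by
    rw [ContinuousLinearMap.adjoint_comp, LinearIsometryEquiv.adjoint_eq_symm,
      ContinuousLinearMap.comp_apply]
    exact (hA.mul_norm_le_norm_adjoint v).trans_eq (V.symm.norm_map _).symm
  mul_norm_le_norm_apply h hh := hA.mul_norm_le_norm_apply (V h) (by rwa [V.norm_map])

lemma comp_add {G : Type*} [NormedAddCommGroup G] [InnerProductSpace ℝ G] [CompleteSpace G]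
    {A : G →L[ℝ] F} {S₁ S₂ : E →L[ℝ] G} {m K δ : ℝ}
    (hm : 0 ≤ m) (hK : 0 ≤ K) (hδ : 0 ≤ δ) (ht : t ≤ m * (1 - δ) - K)
    (hadj : ∀ v, s * ‖v‖ ≤
      ‖ContinuousLinearMap.adjoint (S₁ + S₂) (ContinuousLinearMap.adjoint A v)‖)
    (hlow : ∀ x ∈ S₁.range, m * ‖x‖ ≤ ‖A x‖)
    (hS₂ : ‖S₂‖ ≤ δ * r) (hAS₂ : ‖A ∘L S₂‖ ≤ K * r) :
    IsGoodDesign (A ∘L (S₁ + S₂)) (S₁ + S₂) s r t where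
  mul_norm_le_norm_adjoint v := by
    rw [ContinuousLinearMap.adjoint_comp]
    exact hadj v
  mul_norm_le_norm_apply h hcone := by
    set x := (S₁ + S₂) h
    have hx : x = S₁ h + S₂ h := rfl
    have hsmall : ‖S₂ h‖ ≤ δ * ‖x‖ := by
      calc ‖S₂ h‖ ≤ δ * r * ‖h‖ := S₂.le_of_opNorm_le hS₂ h
        _ = δ * (r * ‖h‖) := mul_assoc _ _ _
        _ ≤ δ * ‖x‖ := by gcongr
    have hAsmall : ‖A (S₂ h)‖ ≤ K * ‖x‖ := by
      calc ‖A (S₂ h)‖ ≤ K * r * ‖h‖ := (A ∘L S₂).le_of_opNorm_le hAS₂ h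
        _ = K * (r * ‖h‖) := mul_assoc _ _ _
        _ ≤ K * ‖x‖ := by gcongr
    have hlarge : ‖x‖ - ‖S₂ h‖ ≤ ‖S₁ h‖ := by
      rw [hx]
      linarith [norm_add_le (S₁ h) (S₂ h)]
    calc t * ‖x‖ ≤ (m * (1 - δ) - K) * ‖x‖ := by gcongr
      _ = m * (‖x‖ - δ * ‖x‖) - K * ‖x‖ := by ring
      _ ≤ m * ‖S₁ h‖ - ‖A (S₂ h)‖ := by gcongr; linarith
      _ ≤ ‖A (S₁ h)‖ - ‖A (S₂ h)‖ := by gcongr; exact hlow _ ⟨h, rfl⟩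
      _ ≤ ‖A (S₁ h) + A (S₂ h)‖ := norm_sub_le_norm_add _ _
      _ = ‖A x‖ := by rw [hx, map_add]

end IsGoodDesign

end MinNorm

section SqrtDiag

variable {κ : Type*} [Fintype κ] [DecidableEq κ] {w w' : κ → ℝ} {L : ℝ}

/-- The operator multiplying the `j`-th coordinate by `√(w j)`, that is, the square root of the
diagonal operator with entries `w`. -/
def sqrtDiag (w : κ → ℝ) : EuclideanSpace ℝ κ →L[ℝ] EuclideanSpace ℝ κ :=
  euclideanCLM (Matrix.diagonal fun j => √(w j))

lemma sqrtDiag_apply (w : κ → ℝ) (x : EuclideanSpace ℝ κ) (j : κ) :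
    sqrtDiag w x j = √(w j) * x j := by
  rw [sqrtDiag, euclideanCLM_apply]
  exact Matrix.mulVec_diagonal _ _ _

lemma norm_sq_sqrtDiag_apply (hw : ∀ j, 0 ≤ w j) (x : EuclideanSpace ℝ κ) :
    ‖sqrtDiag w x‖ ^ 2 = ∑ j, w j * x j ^ 2 := by
  simp only [EuclideanSpace.norm_sq_eq, sqrtDiag_apply, norm_mul, mul_pow, Real.norm_eq_abs,
    sq_abs, Real.sq_sqrt (hw _)]

lemma adjoint_sqrtDiag (w : κ → ℝ) : ContinuousLinearMap.adjoint (sqrtDiag w) = sqrtDiag w := by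
  rw [sqrtDiag, adjoint_euclideanCLM, Matrix.diagonal_transpose]

lemma norm_sqrtDiag_apply_mono (h : ∀ j, w j ≤ w' j) (x : EuclideanSpace ℝ κ) :
    ‖sqrtDiag w x‖ ≤ ‖sqrtDiag w' x‖ := by
  simp only [EuclideanSpace.norm_eq, sqrtDiag_apply, norm_mul, Real.norm_eq_abs, abs_of_nonneg
    (Real.sqrt_nonneg _)]
  gcongr with j
  exact h j

lemma norm_sqrtDiag_le (hL : ∀ j, w j ≤ L) : ‖sqrtDiag w‖ ≤ √L := by
  refine ContinuousLinearMap.opNorm_le_bound _ (Real.sqrt_nonneg _) fun x => ?_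
  have hconst : sqrtDiag (fun _ => L) x = √L • x := by
    ext j
    rw [sqrtDiag_apply, PiLp.smul_apply, smul_eq_mul]
  calc ‖sqrtDiag w x‖ ≤ ‖sqrtDiag (fun _ => L) x‖ := norm_sqrtDiag_apply_mono hL x
    _ = √L * ‖x‖ := by rw [hconst, norm_smul, Real.norm_of_nonneg (Real.sqrt_nonneg _)]

lemma sqrtDiag_indicator_add_compl (s : Set κ) (w : κ → ℝ) :
    sqrtDiag (s.indicator w) + sqrtDiag (sᶜ.indicator w) = sqrtDiag w := by
  ext x j
  rw [_root_.add_apply, PiLp.add_apply]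
  simp only [sqrtDiag_apply]
  by_cases hj : j ∈ s <;> simp [hj]

lemma finrank_range_sqrtDiag_indicator_le (s : Set κ) (w : κ → ℝ) :
    Module.finrank ℝ (sqrtDiag (s.indicator w)).range ≤ s.ncard := by
  rw [sqrtDiag, finrank_range_euclideanCLM, Matrix.rank_diagonal, ← Nat.card_eq_fintype_card]
  refine Set.ncard_le_ncard (s := {j | √(s.indicator w j) ≠ 0}) fun j hj => ?_
  by_contra hjs
  exact hj (by rw [Set.indicator_of_notMem hjs, Real.sqrt_zero])

end SqrtDiag

section SpectralTruncation

variable {κ : Type*} {f : κ → ℝ} {θ R : ℝ}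

lemma indicator_compl_setOf_le (f : κ → ℝ) (hθ : 0 ≤ θ) (j : κ) :
    {j | θ ≤ f j}ᶜ.indicator f j ≤ θ :=
  Set.indicator_apply_le' (fun hj => (lt_of_not_ge (Set.notMem_of_mem_compl hj)).le) fun _ => hθ

variable [Fintype κ]

lemma ncard_mul_le_sum (hf : ∀ j, 0 ≤ f j) : {j | θ ≤ f j}.ncard * θ ≤ ∑ j, f j := by
  rw [Set.ncard_eq_toFinset_card', ← nsmul_eq_mul]
  exact (Finset.card_nsmul_le_sum _ f θ fun j hj => by simpa using hj).trans
    (Finset.sum_le_univ_sum_of_nonneg hf)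

lemma ncard_mul_le_sum_min (hf : ∀ j, 0 ≤ f j) (hθ : 0 ≤ θ) (hR : θ ≤ R) :
    {j | θ ≤ f j}.ncard * θ ≤ ∑ j, min (f j) R := by
  have hset : {j | θ ≤ f j} = {j | θ ≤ min (f j) R} := by
    ext j
    simp [hR]
  rw [hset]
  exact ncard_mul_le_sum fun j => le_min (hf j) (hθ.trans hR)

lemma sum_indicator_compl_le_sum_min (hf : ∀ j, 0 ≤ f j) (hθ : 0 ≤ θ) (hR : θ ≤ R) :
    ∑ j, {j | θ ≤ f j}ᶜ.indicator f j ≤ ∑ j, min (f j) R :=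
  Finset.sum_le_sum fun j _ => le_min (Set.indicator_apply_le' (fun _ => le_rfl) fun _ => hf j)
    ((indicator_compl_setOf_le f hθ j).trans hR)

end SpectralTruncation

section DesignProbability

variable {Ω : Type*} [MeasurableSpace Ω] {μ : Measure Ω} [IsFiniteMeasure μ]
  {ι κ E : Type*} [Fintype ι] [Fintype κ] [NormedAddCommGroup E] [InnerProductSpace ℝ E]

lemma real_not_forall_mem_mul_norm_le {A : Ω → E →L[ℝ] EuclideanSpace ℝ ι}
    (hA : IsIsotropicGaussian μ A) (K : Submodule ℝ E) [FiniteDimensional ℝ K] {N : ℝ}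
    (hK : (Module.finrank ℝ K : ℝ) ≤ N) (hN : 1024 * N ≤ Fintype.card ι) :
    μ.real {ω | ¬ ∀ x ∈ K, √(Fintype.card ι) / 4 * ‖x‖ ≤ ‖A ω x‖} ≤ 2 * Real.exp (-N) := by
  have hlow := (hA.comp_linearIsometry K.subtypeₗᵢ).real_not_forall_le_norm_le
    (D := ContinuousLinearMap.id ℝ _) (w := fun _ => 1) (L := 1) (fun _ => zero_le_one)
    (fun _ => le_rfl) one_pos (fun z => by simp [EuclideanSpace.norm_sq_eq]) hK (by simpa using hN)
  simpa using hlow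

variable [DecidableEq κ] {A : Ω → EuclideanSpace ℝ κ →L[ℝ] EuclideanSpace ℝ ι}
  {lam w : κ → ℝ} {L r M : ℝ}

lemma real_lt_opNorm_comp_sqrtDiag_le
    (hA : IsIsotropicGaussian μ fun ω => ContinuousLinearMap.adjoint (A ω)) (hw : ∀ j, 0 ≤ w j)
    (hL : ∀ j, w j ≤ L) (hL0 : 0 < L) (hM : 0 ≤ M)
    (hsum : 4 * ∑ j, w j + 32 * L * Fintype.card ι ≤ M ^ 2) :
    μ.real {ω | M < ‖A ω ∘L sqrtDiag w‖} ≤ Real.exp (-Fintype.card ι) := by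
  refine (measureReal_mono fun ω (hω : M < _) => ?_).trans
    (hA.real_lt_sq_opNorm_le hw hL hL0 (norm_sq_sqrtDiag_apply hw) (by simp))
  have hadj : ‖sqrtDiag w ∘L ContinuousLinearMap.adjoint (A ω)‖ = ‖A ω ∘L sqrtDiag w‖ := by
    rw [← LinearIsometryEquiv.norm_map ContinuousLinearMap.adjoint (A ω ∘L sqrtDiag w),
      ContinuousLinearMap.adjoint_comp, adjoint_sqrtDiag]
  rw [Set.mem_ofPred_eq, hadj]
  exact hsum.trans_lt (by gcongr)

lemma isGoodDesign_comp_sqrtDiag {A : EuclideanSpace ℝ κ →L[ℝ] EuclideanSpace ℝ ι} {s : ℝ}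
    (hr : 0 ≤ r) (hwlam : ∀ j, w j ≤ lam j)
    (hadj : ∀ v, s * ‖v‖ ≤ ‖sqrtDiag w (ContinuousLinearMap.adjoint A v)‖)
    (hlow : ∀ x ∈ (sqrtDiag ({j | (r / 128) ^ 2 ≤ lam j}.indicator lam)).range,
      √(Fintype.card ι) / 4 * ‖x‖ ≤ ‖A x‖)
    (hupp : ‖A ∘L sqrtDiag ({j | (r / 128) ^ 2 ≤ lam j}ᶜ.indicator lam)‖ ≤
      √(Fintype.card ι) / 16 * r) :
    IsGoodDesign (A ∘L sqrtDiag lam) (sqrtDiag lam) s r (√(Fintype.card ι) / 8) := by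
  set S := {j | (r / 128) ^ 2 ≤ lam j}
  have hsmall : ‖sqrtDiag (Sᶜ.indicator lam)‖ ≤ 1 / 128 * r := by
    refine (norm_sqrtDiag_le (L := (r / 128) ^ 2) ?_).trans_eq ?_
    · exact indicator_compl_setOf_le lam (sq_nonneg _)
    · rw [Real.sqrt_sq (by positivity)]
      ring
  rw [← sqrtDiag_indicator_add_compl S lam]
  refine IsGoodDesign.comp_add (m := √(Fintype.card ι) / 4) (by positivity) (by positivity)
    (by norm_num) ?_ (fun v => ?_) hlow hsmall hupp
  · linarith [Real.sqrt_nonneg (Fintype.card ι : ℝ)]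
  · rw [sqrtDiag_indicator_add_compl, adjoint_sqrtDiag]
    exact (hadj v).trans (norm_sqrtDiag_apply_mono hwlam _)

lemma real_not_isGoodDesign_le (hA : IsIsotropicGaussian μ A)
    (hA' : IsIsotropicGaussian μ fun ω => ContinuousLinearMap.adjoint (A ω))
    (hlam : ∀ j, 0 ≤ lam j) (hw : ∀ j, 0 ≤ w j) (hwlam : ∀ j, w j ≤ lam j) (hwL : ∀ j, w j ≤ L)
    (hL0 : 0 < L) (hwR : 1024 * Fintype.card ι * L ≤ ∑ j, w j) (hr : 0 < r)
    (hmin : ∑ j, min (lam j) (r ^ 2) ≤ 1 / 2 ^ 24 * Fintype.card ι * r ^ 2) :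
    μ.real {ω | ¬ IsGoodDesign (A ω ∘L sqrtDiag lam) (sqrtDiag lam) (√(∑ j, w j) / 4) r
      (√(Fintype.card ι) / 8)} ≤ 5 * Real.exp (-(Fintype.card ι / 1024)) := by
  set n : ℝ := (Fintype.card ι : ℝ)
  have hn : 0 ≤ n := Nat.cast_nonneg _
  set S := {j | (r / 128) ^ 2 ≤ lam j}
  have hθ : (r / 128) ^ 2 ≤ r ^ 2 := by nlinarith [sq_nonneg r]
  have hcard : (Module.finrank ℝ (sqrtDiag (S.indicator lam)).range : ℝ) ≤ n / 1024 := by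
    have hS' := (ncard_mul_le_sum_min hlam (sq_nonneg (r / 128)) hθ).trans hmin
    refine (Nat.cast_le.2 (finrank_range_sqrtDiag_indicator_le S lam)).trans ?_
    refine le_of_mul_le_mul_right (hS'.trans_eq ?_) (by positivity : 0 < (r / 128) ^ 2)
    ring
  have hsum := (sum_indicator_compl_le_sum_min hlam (sq_nonneg (r / 128)) hθ).trans hmin
  have hadj := hA'.real_not_forall_le_norm_le hw hwL hL0 (norm_sq_sqrtDiag_apply hw)
    (N := n) (by simp [n]) hwR
  have hlow := real_not_forall_mem_mul_norm_le hA (sqrtDiag (S.indicator lam)).range hcard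
    (by linarith)
  have hupp := real_lt_opNorm_comp_sqrtDiag_le (w := Sᶜ.indicator lam) (M := √n / 16 * r) hA'
    (Set.indicator_nonneg fun j _ => hlam j)
    (indicator_compl_setOf_le lam (sq_nonneg (r / 128)))
    (by positivity) (by positivity) (by
      rw [mul_pow, div_pow √n, Real.sq_sqrt hn]
      linarith [mul_nonneg hn (sq_nonneg r)])
  have hexp : Real.exp (-n) ≤ Real.exp (-(n / 1024)) := Real.exp_le_exp.2 (by linarith)
  refine (measureReal_mono fun ω hω => ?_).trans
    ((measureReal_union_le _ _).trans (add_le_add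
      ((measureReal_union_le _ _).trans (add_le_add hadj hlow)) hupp)) |>.trans (by linarith)
  by_contra hgood
  simp only [Set.mem_union, Set.mem_ofPred_eq, not_or, not_not, not_lt] at hgood
  exact hω (isGoodDesign_comp_sqrtDiag hr.le hwlam hgood.1.1 hgood.1.2 hgood.2)

end DesignProbability

section ChangeOfBasis

variable {ι κ : Type*} [Fintype ι] [Fintype κ] [DecidableEq κ] {lam : κ → ℝ}

/-- The isometry of Euclidean space given by an orthogonal matrix. -/
def orthogonalIsometryEquiv (P : Matrix.orthogonalGroup κ ℝ) :
    EuclideanSpace ℝ κ ≃ₗᵢ[ℝ] EuclideanSpace ℝ κ :=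
  Unitary.linearIsometryEquiv
    ⟨Matrix.toEuclideanCLM (𝕜 := ℝ) P.1, Unitary.map_mem _ P.2⟩

lemma coe_orthogonalIsometryEquiv (P : Matrix.orthogonalGroup κ ℝ) :
    (orthogonalIsometryEquiv P : EuclideanSpace ℝ κ →L[ℝ] EuclideanSpace ℝ κ) =
      euclideanCLM P.1 := by
  rw [orthogonalIsometryEquiv, Unitary.coe_linearIsometryEquiv_apply]
  ext1 x
  rfl

lemma coe_orthogonalIsometryEquiv_symm (P : Matrix.orthogonalGroup κ ℝ) :
    ((orthogonalIsometryEquiv P).symm : EuclideanSpace ℝ κ →L[ℝ] EuclideanSpace ℝ κ) =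
      euclideanCLM P.1ᵀ := by
  rw [← LinearIsometryEquiv.adjoint_eq_symm, coe_orthogonalIsometryEquiv, adjoint_euclideanCLM]

/-- The square root `Λ^{1/2} Pᵀ` of the covariance operator with eigenbasis `P` and eigenvalues
`lam`. Leaving out the outer rotation `P` does not change the norm of the image. -/
def spectralSqrt (P : Matrix.orthogonalGroup κ ℝ) (lam : κ → ℝ) :
    EuclideanSpace ℝ κ →L[ℝ] EuclideanSpace ℝ κ :=
  sqrtDiag lam ∘L ((orthogonalIsometryEquiv P).symm : EuclideanSpace ℝ κ →L[ℝ] EuclideanSpace ℝ κ)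

lemma norm_sq_spectralSqrt_apply (P : Matrix.orthogonalGroup κ ℝ) (hlam : ∀ j, 0 ≤ lam j)
    (h : EuclideanSpace ℝ κ) :
    ‖spectralSqrt P lam h‖ ^ 2 =
      h.ofLp ⬝ᵥ (P.1 * Matrix.diagonal lam * P.1ᵀ) *ᵥ h.ofLp := by
  rw [spectralSqrt, coe_orthogonalIsometryEquiv_symm, ContinuousLinearMap.comp_apply,
    norm_sq_sqrtDiag_apply hlam, euclideanCLM_apply, ← Matrix.mulVec_mulVec,
    ← Matrix.mulVec_mulVec, Matrix.dotProduct_mulVec, ← Matrix.mulVec_transpose, dotProduct]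
  refine Finset.sum_congr rfl fun j _ => ?_
  rw [Matrix.mulVec_diagonal]
  ring

lemma euclideanCLM_mul_conj_diagonal (M : Matrix ι κ ℝ) (P : Matrix.orthogonalGroup κ ℝ)
    (lam : κ → ℝ) :
    euclideanCLM (M * (P.1 * Matrix.diagonal (fun j => √(lam j)) * P.1ᵀ)) =
      (euclideanCLM M ∘L (orthogonalIsometryEquiv P : EuclideanSpace ℝ κ →L[ℝ] _)) ∘L
        spectralSqrt P lam := by
  rw [spectralSqrt, sqrtDiag, coe_orthogonalIsometryEquiv, coe_orthogonalIsometryEquiv_symm,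
    euclideanCLM_mul, euclideanCLM_mul, euclideanCLM_mul, ContinuousLinearMap.comp_assoc,
    ContinuousLinearMap.comp_assoc]

lemma gaussianMatrix_real_not_isGoodDesign_le (P : Matrix.orthogonalGroup κ ℝ)
    {w : κ → ℝ} {L r : ℝ} (hlam : ∀ j, 0 ≤ lam j) (hw : ∀ j, 0 ≤ w j)
    (hwlam : ∀ j, w j ≤ lam j) (hwL : ∀ j, w j ≤ L) (hL0 : 0 < L)
    (hwR : 1024 * Fintype.card ι * L ≤ ∑ j, w j) (hr : 0 < r)
    (hmin : ∑ j, min (lam j) (r ^ 2) ≤ 1 / 2 ^ 24 * Fintype.card ι * r ^ 2) :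
    (gaussianMatrix ι κ).real {Z | ¬ IsGoodDesign
      (euclideanCLM (Matrix.of Z *
        (P.1 * Matrix.diagonal (fun j => √(lam j)) * P.1ᵀ)))
      (spectralSqrt P lam) (√(∑ j, w j) / 4) r (√(Fintype.card ι) / 8)} ≤
    5 * Real.exp (-(Fintype.card ι / 1024)) := by
  let V := orthogonalIsometryEquiv P
  let A (Z : ι → κ → ℝ) := euclideanCLM (Matrix.of Z) ∘L (V : EuclideanSpace ℝ κ →L[ℝ] _)
  have hA : IsIsotropicGaussian (gaussianMatrix ι κ) A :=
    isIsotropicGaussian_euclideanCLM.comp_linearIsometry V.toLinearIsometry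
  have hA' : IsIsotropicGaussian (gaussianMatrix ι κ) fun Z =>
      ContinuousLinearMap.adjoint (A Z) := by
    simp only [A, ContinuousLinearMap.adjoint_comp, LinearIsometryEquiv.adjoint_eq_symm]
    exact isIsotropicGaussian_adjoint_euclideanCLM.linearIsometryEquiv_comp V.symm
  refine (measureReal_mono fun Z hZ => ?_).trans
    (real_not_isGoodDesign_le hA hA' hlam hw hwlam hwL hL0 hwR hr hmin)
  rw [Set.mem_ofPred_eq, euclideanCLM_mul_conj_diagonal] at hZ
  exact fun hgood => hZ (hgood.comp_linearIsometryEquiv V.symm)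

end ChangeOfBasis

section MinInterp

variable {n p : ℕ} {M : Fin n → Fin p → ℝ} {Y ξ : Fin n → ℝ} {b β : Fin p → ℝ}

lemma enorm2_eq_norm (β : Fin p → ℝ) : enorm2 β = ‖WithLp.toLp 2 β‖ := by
  simp only [enorm2, EuclideanSpace.norm_eq, Real.norm_eq_abs, sq_abs]

lemma predNorm_conj_diagonal (P : Matrix.orthogonalGroup (Fin p) ℝ) {lam : Fin p → ℝ}
    (hlam : ∀ j, 0 ≤ lam j) (h : Fin p → ℝ) :
    predNorm (P.1 * Matrix.diagonal lam * P.1ᵀ) h = ‖spectralSqrt P lam (WithLp.toLp 2 h)‖ := by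
  rw [predNorm, ← norm_sq_spectralSqrt_apply P hlam (WithLp.toLp 2 h),
    Real.sqrt_sq (norm_nonneg _)]

namespace IsMinInterp

lemma norm_le (h : IsMinInterp M Y b) (b' : EuclideanSpace ℝ (Fin p))
    (hb' : euclideanCLM (Matrix.of M) b' = euclideanCLM (Matrix.of M) (WithLp.toLp 2 b)) :
    ‖WithLp.toLp 2 b‖ ≤ ‖b'‖ := by
  have hle := h.2 b'.ofLp fun i => (congrFun (congrArg WithLp.ofLp hb') i).trans (h.1 i)
  rwa [enorm2_eq_norm, enorm2_eq_norm] at hle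

lemma map_sub (h : IsMinInterp M (fun i => (∑ j, M i j * β j) + ξ i) b) :
    euclideanCLM (Matrix.of M) (WithLp.toLp 2 b - WithLp.toLp 2 β) = WithLp.toLp 2 ξ := by
  rw [_root_.map_sub, sub_eq_iff_eq_add']
  ext i
  exact h.1 i

variable {H : Type*} [NormedAddCommGroup H] [InnerProductSpace ℝ H]
  {S : EuclideanSpace ℝ (Fin p) →L[ℝ] H} {R r t : ℝ}

lemma enorm2_sub_le (h : IsMinInterp M (fun i => (∑ j, M i j * β j) + ξ i) b) (hR : 0 < R)
    (hM : IsGoodDesign (euclideanCLM (Matrix.of M)) S (√R / 4) r t) :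
    enorm2 (fun j => b j - β j) ≤ enorm2 β + 4 * enorm2 ξ / √R := by
  have key := hM.norm_sub_le (β := WithLp.toLp 2 β) (by positivity) h.norm_le
  rw [h.map_sub, ← enorm2_eq_norm β, ← enorm2_eq_norm ξ, div_div_eq_mul_div, mul_comm _ 4] at key
  exact (enorm2_eq_norm _).trans_le key

lemma norm_map_sub_le (h : IsMinInterp M (fun i => (∑ j, M i j * β j) + ξ i) b) (hn : 0 < n)
    (hR : 0 < R) (hr : 0 ≤ r)
    (hM : IsGoodDesign (euclideanCLM (Matrix.of M)) S (√R / 4) r (√n / 8)) :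
    ‖S (WithLp.toLp 2 fun j => b j - β j)‖ ≤
      max ((enorm2 β + 4 * enorm2 ξ / √R) * r) (8 * enorm2 ξ / √n) := by
  have key := hM.norm_map_sub_le (β := WithLp.toLp 2 β) (by positivity) hr (by positivity)
    h.norm_le
  rwa [h.map_sub, ← enorm2_eq_norm, ← enorm2_eq_norm, div_div_eq_mul_div, div_div_eq_mul_div,
    mul_comm _ 4, mul_comm _ 8] at key

end IsMinInterp

end MinInterp

section Spectrum

variable {p n k : ℕ} {lam : ℕ → ℝ} {c0 η : ℝ}

lemma pos_of_mem_kstarSet (hk : k ∈ kstarSet p lam c0 n) (hc0 : 0 < c0) (hn : 0 < n)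
    (hlam : ∀ i, 1 ≤ i → i ≤ p → 0 ≤ lam i) : 0 < lam k := by
  refine (hlam k hk.1 hk.2.1).lt_of_ne' fun hzero => ?_
  have hle := hk.2.2
  rw [hzero, div_zero] at hle
  exact hle.not_gt (by positivity)

lemma mul_le_rsum_of_mem_kstarSet (hk : k ∈ kstarSet p lam c0 n) (hlamk : 0 < lam k) :
    c0 * n * lam k ≤ rsum p lam k :=
  (le_div_iff₀ hlamk).1 hk.2.2

lemma rsum_pos_of_mem_kstarSet (hk : k ∈ kstarSet p lam c0 n) (hc0 : 0 < c0) (hn : 0 < n)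
    (hlam : ∀ i, 1 ≤ i → i ≤ p → 0 ≤ lam i) : 0 < rsum p lam k := by
  have hlamk := pos_of_mem_kstarSet hk hc0 hn hlam
  exact lt_of_lt_of_le (by positivity) (mul_le_rsum_of_mem_kstarSet hk hlamk)

/-- The spectrum `(lam (j + 1))_j` with the eigenvalues of index below `k` set to zero, so that its
total mass is `r_k(Σ)`. -/
def tailSpectrum (p : ℕ) (lam : ℕ → ℝ) (k : ℕ) : Fin p → ℝ :=
  Set.indicator {j : Fin p | k ≤ (j : ℕ) + 1} fun j => lam (j + 1)

lemma tailSpectrum_nonneg (hlam : ∀ i, 1 ≤ i → i ≤ p → 0 ≤ lam i) (j : Fin p) :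
    0 ≤ tailSpectrum p lam k j :=
  Set.indicator_nonneg (fun _ _ => hlam _ (by lia) (by lia)) j

lemma tailSpectrum_le (hlam : ∀ i, 1 ≤ i → i ≤ p → 0 ≤ lam i) (j : Fin p) :
    tailSpectrum p lam k j ≤ lam (j + 1) :=
  Set.indicator_le_self' (fun _ _ => hlam _ (by lia) (by lia)) j

lemma tailSpectrum_le_apply (hanti : ∀ i j, 1 ≤ i → i ≤ j → j ≤ p → lam j ≤ lam i) (hk : 1 ≤ k)
    (hlamk : 0 ≤ lam k) (j : Fin p) : tailSpectrum p lam k j ≤ lam k :=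
  Set.indicator_apply_le' (fun hj => hanti _ _ hk hj (by lia)) fun _ => hlamk

lemma sum_tailSpectrum (hk : 1 ≤ k) : ∑ j, tailSpectrum p lam k j = rsum p lam k := by
  simp only [tailSpectrum, Set.indicator_apply, Set.mem_ofPred_eq]
  rw [Fin.sum_univ_eq_sum_range (fun j => if k ≤ j + 1 then lam (j + 1) else 0) p,
    Finset.range_eq_Ico, Finset.sum_Ico_add' (fun j => if k ≤ j then lam j else 0) 0 p 1,
    ← Finset.sum_filter, rsum]
  refine Finset.sum_congr ?_ fun _ _ => rfl
  ext i
  simp only [Finset.mem_filter, Finset.mem_Ico, Finset.mem_Icc]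
  lia

section MinSum

variable {κ : Type*} [Fintype κ] {μ w : κ → ℝ} {a L r : ℝ}

lemma exists_pos_sum_min_sq_le (hμ : ∀ j, 0 ≤ μ j) (ha : 0 < a) :
    ∃ r > 0, ∑ j, min (μ j) (r ^ 2) ≤ a * r ^ 2 := by
  have hsum : 0 ≤ (∑ j, μ j) / a := div_nonneg (Finset.sum_nonneg fun j _ => hμ j) ha.le
  refine ⟨√((∑ j, μ j) / a + 1), by positivity, ?_⟩
  rw [Real.sq_sqrt (by positivity)]
  calc ∑ j, min (μ j) ((∑ j, μ j) / a + 1) ≤ ∑ j, μ j :=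
        Finset.sum_le_sum fun j _ => min_le_left _ _
    _ = a * ((∑ j, μ j) / a) := by field_simp
    _ ≤ a * ((∑ j, μ j) / a + 1) := by gcongr; linarith

lemma sqrt_le_of_sum_min_sq_le (hw : ∀ j, 0 ≤ w j) (hwμ : ∀ j, w j ≤ μ j) (hwL : ∀ j, w j ≤ L)
    (hL : 0 < L) (haL : a * L < ∑ j, w j) (hr : 0 < r)
    (hsum : ∑ j, min (μ j) (r ^ 2) ≤ a * r ^ 2) : √L ≤ r := by
  by_contra! hlt
  have hrL : r ^ 2 / L ≤ 1 := (div_le_one hL).2 ((Real.lt_sqrt hr.le).1 hlt).le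
  have hmin (j : κ) : w j * (r ^ 2 / L) ≤ min (μ j) (r ^ 2) := by
    refine le_min ((mul_le_of_le_one_right (hw j) hrL).trans (hwμ j)) ?_
    calc w j * (r ^ 2 / L) ≤ L * (r ^ 2 / L) := by gcongr; exact hwL j
      _ = r ^ 2 := mul_div_cancel₀ _ hL.ne'
  have hcontra : a * r ^ 2 < a * r ^ 2 :=
    calc a * r ^ 2 = a * L * (r ^ 2 / L) := by field_simp
      _ < (∑ j, w j) * (r ^ 2 / L) := by gcongr
      _ = ∑ j, w j * (r ^ 2 / L) := Finset.sum_mul _ _ _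
      _ ≤ ∑ j, min (μ j) (r ^ 2) := Finset.sum_le_sum fun j _ => hmin j
      _ ≤ a * r ^ 2 := hsum
  exact hcontra.false

end MinSum

lemma rstar_mem (hlam : ∀ i, 1 ≤ i → i ≤ p → 0 ≤ lam i)
    (hanti : ∀ i j, 1 ≤ i → i ≤ j → j ≤ p → lam j ≤ lam i) (hn : 0 < n)
    (hk : k ∈ kstarSet p lam c0 n) (hη0 : 0 < η) (hη : η < c0) :
    rstar p n lam η ∈
      {r : ℝ | 0 < r ∧ ∑ j : Fin p, min (lam (j + 1)) (r ^ 2) ≤ η * n * r ^ 2} := by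
  have hlamk : 0 < lam k := pos_of_mem_kstarSet hk (hη0.trans hη) hn hlam
  have hlow {r : ℝ} (hr : 0 < r)
      (hsum : ∑ j : Fin p, min (lam (j + 1)) (r ^ 2) ≤ η * n * r ^ 2) : √(lam k) ≤ r := by
    refine sqrt_le_of_sum_min_sq_le (tailSpectrum_nonneg hlam) (tailSpectrum_le hlam)
      (tailSpectrum_le_apply hanti hk.1 hlamk.le) hlamk ?_ hr hsum
    rw [sum_tailSpectrum hk.1]
    exact lt_of_lt_of_le (by gcongr) (mul_le_rsum_of_mem_kstarSet hk hlamk)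
  have hset : {r : ℝ | 0 < r ∧ ∑ j : Fin p, min (lam (j + 1)) (r ^ 2) ≤ η * n * r ^ 2} =
      Set.Ici √(lam k) ∩ {r | ∑ j : Fin p, min (lam (j + 1)) (r ^ 2) ≤ η * n * r ^ 2} :=
    Set.ext fun r => and_congr_left fun hsum =>
      ⟨fun hr => hlow hr hsum, (Real.sqrt_pos.2 hlamk).trans_le⟩
  refine IsClosed.csInf_mem ?_ ?_ ⟨0, fun r hr => hr.1.le⟩
  · rw [hset]
    exact isClosed_Ici.inter (isClosed_le (by fun_prop) (by fun_prop))
  · exact exists_pos_sum_min_sq_le (fun j => hlam _ (by lia) (by lia)) (by positivity)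

end Spectrum

section GaussianDesign

variable {n p k : ℕ} {lam : ℕ → ℝ} {r : ℝ}

lemma measurableSet_isGoodDesign {ι κ H : Type*} [Fintype ι] [Fintype κ]
    [DecidableEq κ] [NormedAddCommGroup H] [InnerProductSpace ℝ H]
    (S : EuclideanSpace ℝ κ →L[ℝ] H) (s r t : ℝ) :
    MeasurableSet {M : ι → κ → ℝ | IsGoodDesign (euclideanCLM (Matrix.of M)) S s r t} := by
  have happly (h : EuclideanSpace ℝ κ) :
      Continuous fun M : ι → κ → ℝ => euclideanCLM (Matrix.of M) h :=
    continuous_euclideanCLM_apply h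
  have hadjoint (v : EuclideanSpace ℝ ι) : Continuous fun M : ι → κ → ℝ =>
      ContinuousLinearMap.adjoint (euclideanCLM (Matrix.of M)) v := by
    simp only [adjoint_euclideanCLM]
    exact (continuous_euclideanCLM_apply v).comp continuous_id.matrix_transpose
  have hset : {M : ι → κ → ℝ | IsGoodDesign (euclideanCLM (Matrix.of M)) S s r t} =
      (⋂ v, {M | s * ‖v‖ ≤ ‖ContinuousLinearMap.adjoint (euclideanCLM (Matrix.of M)) v‖}) ∩
        ⋂ h, ⋂ (_ : r * ‖h‖ ≤ ‖S h‖), {M | t * ‖S h‖ ≤ ‖euclideanCLM (Matrix.of M) h‖} := by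
    ext M
    simp only [Set.mem_inter_iff, Set.mem_iInter, Set.mem_ofPred_eq]
    exact ⟨fun hM => ⟨hM.1, hM.2⟩, fun hM => ⟨hM.1, hM.2⟩⟩
  refine hset ▸ IsClosed.measurableSet ?_
  exact (isClosed_iInter fun v => isClosed_le continuous_const (hadjoint v).norm).inter
    (isClosed_iInter fun h => isClosed_iInter fun _ =>
      isClosed_le continuous_const (happly h).norm)

lemma transpose_covHalf (p : ℕ) (lam : ℕ → ℝ) (P : Matrix (Fin p) (Fin p) ℝ) :
    (covHalf p lam P)ᵀ = covHalf p lam P := by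
  rw [covHalf, Matrix.transpose_mul, Matrix.transpose_mul, Matrix.transpose_transpose,
    Matrix.diagonal_transpose, Matrix.mul_assoc]

lemma of_covHalf_mulVec (lam : ℕ → ℝ) (P : Matrix (Fin p) (Fin p) ℝ) (Z : Fin n → Fin p → ℝ) :
    Matrix.of (fun i => covHalf p lam P *ᵥ Z i) = Matrix.of Z * covHalf p lam P := by
  ext i j
  rw [Matrix.mul_apply_eq_vecMul, ← Matrix.mulVec_transpose, transpose_covHalf]
  rfl

instance isProbabilityMeasure_mvGaussian (p : ℕ) (lam : ℕ → ℝ) (P : Matrix (Fin p) (Fin p) ℝ) :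
    IsProbabilityMeasure (mvGaussian p lam P) := by
  rw [mvGaussian, _root_.stdGaussian]
  exact Measure.isProbabilityMeasure_map (by fun_prop : Continuous _).aemeasurable

lemma pi_mvGaussian_eq_map (n p : ℕ) (lam : ℕ → ℝ) (P : Matrix (Fin p) (Fin p) ℝ) :
    (Measure.pi fun _ : Fin n => mvGaussian p lam P) =
      (gaussianMatrix (Fin n) (Fin p)).map fun Z i => covHalf p lam P *ᵥ Z i := by
  have : IsProbabilityMeasure ((Measure.pi fun _ : Fin p => gaussianReal 0 1).map
    fun g => covHalf p lam P *ᵥ g) := isProbabilityMeasure_mvGaussian p lam P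
  simp only [mvGaussian, _root_.stdGaussian]
  exact (Measure.pi_map_pi fun _ => (by fun_prop : Continuous _).aemeasurable).symm

lemma pi_mvGaussian_real_not_isGoodDesign_le (P : Matrix.orthogonalGroup (Fin p) ℝ)
    (hlam : ∀ i, 1 ≤ i → i ≤ p → 0 ≤ lam i)
    (hanti : ∀ i j, 1 ≤ i → i ≤ j → j ≤ p → lam j ≤ lam i) (hn : 0 < n)
    (hk : k ∈ kstarSet p lam 1024 n) (hr : 0 < r)
    (hmin : ∑ j : Fin p, min (lam (j + 1)) (r ^ 2) ≤ 1 / 2 ^ 24 * n * r ^ 2) :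
    (Measure.pi fun _ : Fin n => mvGaussian p lam P.1).real
      {M | ¬ IsGoodDesign (euclideanCLM (Matrix.of M)) (spectralSqrt P fun j => lam (j + 1))
        (√(rsum p lam k) / 4) r (√n / 8)} ≤ 5 * Real.exp (-(n / 1024)) := by
  have hlamk : 0 < lam k := pos_of_mem_kstarSet hk (by norm_num) hn hlam
  have hbound := gaussianMatrix_real_not_isGoodDesign_le (ι := Fin n) P
    (fun j => hlam _ (by lia) (by lia)) (tailSpectrum_nonneg hlam) (tailSpectrum_le hlam)
    (tailSpectrum_le_apply hanti hk.1 hlamk.le) hlamk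
    (by rw [sum_tailSpectrum hk.1, Fintype.card_fin]; exact mul_le_rsum_of_mem_kstarSet hk hlamk)
    hr (by rwa [Fintype.card_fin])
  rw [sum_tailSpectrum hk.1, Fintype.card_fin] at hbound
  have hmeas : Measurable fun (Z : Fin n → Fin p → ℝ) i => covHalf p lam P.1 *ᵥ Z i :=
    (by fun_prop : Continuous _).measurable
  rw [pi_mvGaussian_eq_map]
  refine (map_measureReal_apply hmeas (measurableSet_isGoodDesign _ _ _ _).compl).trans_le ?_
  simp only [Set.compl_ofPred, Set.preimage_ofPred_eq, of_covHalf_mulVec]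
  exact hbound

end GaussianDesign

section Model

variable {Ω : Type*} [MeasurableSpace Ω] {P : Measure Ω} [IsProbabilityMeasure P]

lemma ofReal_one_sub_le_measure {α : Type*} [MeasurableSpace α] {X : Ω → α} {ν : Measure α}
    [IsProbabilityMeasure ν] (hX : P.map X = ν) {B : Set α} {ε : ℝ} (hB : ν.real B ≤ ε)
    {A : Set Ω} (hA : ∀ᵐ ω ∂P, X ω ∉ B → ω ∈ A) : ENNReal.ofReal (1 - ε) ≤ P A := by
  have hXm : AEMeasurable X P :=
    AEMeasurable.of_map_ne_zero (hX ▸ IsProbabilityMeasure.ne_zero ν)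
  have hcompl : P Aᶜ ≤ ν B :=
    calc P Aᶜ ≤ P (X ⁻¹' B) := measure_mono_ae (hA.mono fun _ hω hωA => not_imp_comm.1 hω hωA)
      _ ≤ P.map X B := Measure.le_map_apply hXm B
      _ = ν B := by rw [hX]
  have hcompl_real : P.real Aᶜ ≤ ε :=
    (ENNReal.toReal_mono (measure_ne_top ν B) hcompl).trans hB
  have hunion : 1 ≤ P.real A + P.real Aᶜ := by
    simpa only [Set.union_compl_self, probReal_univ] using measureReal_union_le (μ := P) A Aᶜ
  exact ENNReal.ofReal_le_of_le_toReal (by linarith [measureReal_def P A])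

theorem stmt0_general {n p : ℕ} (hn : 0 < n) {lam : ℕ → ℝ}
    {Porth Sig : Matrix (Fin p) (Fin p) ℝ} (hlam : ∀ k, 1 ≤ k → k ≤ p → 0 ≤ lam k)
    (hanti : ∀ j k, 1 ≤ j → j ≤ k → k ≤ p → lam k ≤ lam j) (hPorth : Porth * Porthᵀ = 1)
    (hSig : Sig = Porth * Matrix.diagonal (fun i : Fin p => lam ((i : ℕ) + 1)) * Porthᵀ)
    {X : Ω → Fin n → Fin p → ℝ} {ξ : Ω → Fin n → ℝ} {βstar : Fin p → ℝ} {βhat : Ω → Fin p → ℝ}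
    (hX : P.map X = Measure.pi fun _ : Fin n => mvGaussian p lam Porth)
    (hβhat : ∀ᵐ ω ∂P, IsMinInterp (X ω) (fun i => (∑ j, X ω i j * βstar j) + ξ ω i) (βhat ω))
    (hne : (kstarSet p lam 1024 n).Nonempty) {η : ℝ} (hη0 : 0 < η) (hη : η ≤ 1 / 2 ^ 24) :
    ENNReal.ofReal (1 - 5 * Real.exp (-(1 / 1024) * n)) ≤
      P {ω | enorm2 (fun j => βhat ω j - βstar j) ≤ rho p lam 1024 n βstar (enorm2 (ξ ω)) ∧
        predNorm Sig (fun j => βhat ω j - βstar j) ≤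
          max (rho p lam 1024 n βstar (enorm2 (ξ ω)) * rstar p n lam η)
            (8 * enorm2 (ξ ω) / √n)} := by
  have hk : kstar p lam 1024 n ∈ kstarSet p lam 1024 n := Nat.sInf_mem hne
  have hR : 0 < rsum p lam (kstar p lam 1024 n) :=
    rsum_pos_of_mem_kstarSet hk (by norm_num) hn hlam
  obtain ⟨hr, hrmin⟩ := rstar_mem hlam hanti hn hk hη0 (hη.trans_lt (by norm_num))
  let V : Matrix.orthogonalGroup (Fin p) ℝ := ⟨Porth, (Matrix.mem_orthogonalGroup_iff _ _).2 hPorth⟩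
  have hbad := pi_mvGaussian_real_not_isGoodDesign_le V hlam hanti hn hk hr
    (hrmin.trans (by gcongr))
  rw [show -(n / 1024 : ℝ) = -(1 / 1024) * n by ring] at hbad
  refine ofReal_one_sub_le_measure hX hbad (hβhat.mono fun ω hω hgood => ?_)
  rw [Set.mem_ofPred_eq, not_not] at hgood
  refine ⟨hω.enorm2_sub_le hR hgood, ?_⟩
  rw [hSig, predNorm_conj_diagonal V fun j => hlam _ (by lia) (by lia)]
  exact hω.norm_map_sub_le hn hR hr.le hgood

end Model

/-- Theorem 1, upper bounds: there is an absolute constant `c > 0` such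
that in the model `Y = Xβ* + ξ` with i.i.d. `N(0,Σ)` rows, if `k* ≤ c n` then for `η`
small enough there are absolute constants `c₁, c₂, c₃ > 0` such that with probability at
least `1 - c₁ e^{-c₂ n}` the minimum `ℓ2`-norm interpolator `β̂` satisfies
`‖β̂ - β*‖₂ ≤ ρ` and `‖Σ^{1/2}(β̂ - β*)‖₂ ≤ max (ρ r*(η)) (c₃ ‖ξ‖₂/√n)`. -/
theorem stmt0 :
    ∃ c0 > (0 : ℝ), ∃ c > (0 : ℝ), ∃ η0 > (0 : ℝ), ∀ η : ℝ, 0 < η → η ≤ η0 →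
    ∃ c1 > (0 : ℝ), ∃ c2 > (0 : ℝ), ∃ c3 > (0 : ℝ),
    ∀ (n p : ℕ), 0 < n → n ≤ p →
    ∀ (lam : ℕ → ℝ) (Porth Sig : Matrix (Fin p) (Fin p) ℝ),
      (∀ k, 1 ≤ k → k ≤ p → 0 ≤ lam k) →
      (∀ j k, 1 ≤ j → j ≤ k → k ≤ p → lam k ≤ lam j) →
      Porth * Porthᵀ = 1 →
      Sig = Porth * Matrix.diagonal (fun i : Fin p => lam ((i : ℕ) + 1)) * Porthᵀ →
      n ≤ Sig.rank →
    ∀ (Ω : Type) (_ : MeasurableSpace Ω) (P : Measure Ω), IsProbabilityMeasure P →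
    ∀ (X : Ω → Fin n → Fin p → ℝ) (ξ : Ω → Fin n → ℝ) (βstar : Fin p → ℝ)
      (βhat : Ω → Fin p → ℝ),
      -- the rows of `X` are i.i.d. `N(0,Σ)`
      Measure.map X P = (Measure.pi fun _ : Fin n => mvGaussian p lam Porth) →
      -- `β̂` is the minimum `ℓ2`-norm interpolator for `Y = Xβ* + ξ`
      (∀ᵐ ω ∂P, IsMinInterp (X ω)
        (fun i => (∑ j, X ω i j * βstar j) + ξ ω i) (βhat ω)) →
      -- `k*` is well defined and `k* ≤ c n`
      (kstarSet p lam c0 n).Nonempty → (kstar p lam c0 n : ℝ) ≤ c * n →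
      ENNReal.ofReal (1 - c1 * Real.exp (-c2 * n)) ≤
        P {ω | enorm2 (fun j => βhat ω j - βstar j) ≤
                 rho p lam c0 n βstar (enorm2 (ξ ω)) ∧
               predNorm Sig (fun j => βhat ω j - βstar j) ≤
                 max (rho p lam c0 n βstar (enorm2 (ξ ω)) * rstar p n lam η)
                     (c3 * enorm2 (ξ ω) / Real.sqrt n)} :=
  ⟨1024, by norm_num, 1, one_pos, 1 / 2 ^ 24, by norm_num, fun _ hη0 hη =>
    ⟨5, by norm_num, 1 / 1024, by norm_num, 8, by norm_num,
      fun _ _ hn _ _ _ _ hlam hanti hPorth hSig _ _ _ _ _ _ _ _ _ hX hβhat hne _ =>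
        stmt0_general hn hlam hanti hPorth hSig hX hβhat hne hη0 hη⟩⟩
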